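/- Let S ⊆ V, let w^S be the minimizer of ℓ among weight vectors supported on S, and let T ⊆ V be disjoint from S. Then E(S) − E(S∪T) ≤ (1/(4λ)) ∑_{j∈T} ((∇ℓ(w^S))_j)². -/

import Mathlib

open scoped BigOperators RealInnerProductSpace

/-- The regularized gradient-matching objective
`ℓ(w) = ‖∑ᵢ wᵢ gᵢ − b‖₂² + λ ∑ᵢ wᵢ²`. -/
noncomputable def ell {V : Type*} [Fintype V] {d : ℕ}
    (g : V → EuclideanSpace ℝ (Fin d)) (b : EuclideanSpace ℝ (Fin d))
    (lam : ℝ) (w : V → ℝ) : ℝ :=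
  ‖(∑ i, w i • g i) - b‖ ^ 2 + lam * ∑ i, (w i) ^ 2

/-- `E(S) = inf { ℓ(w) : w supported on S }`. -/
noncomputable def EErr {V : Type*} [Fintype V] {d : ℕ}
    (g : V → EuclideanSpace ℝ (Fin d)) (b : EuclideanSpace ℝ (Fin d))
    (lam : ℝ) (S : Finset V) : ℝ :=
  sInf {y | ∃ w : V → ℝ, (∀ i ∉ S, w i = 0) ∧ y = ell g b lam w}

/-- The gradient of `ℓ`: `(∇ℓ(u))ⱼ = 2⟨∑ᵢ uᵢ gᵢ − b, gⱼ⟩ + 2λ uⱼ`. -/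
noncomputable def gradEll {V : Type*} [Fintype V] {d : ℕ}
    (g : V → EuclideanSpace ℝ (Fin d)) (b : EuclideanSpace ℝ (Fin d))
    (lam : ℝ) (u : V → ℝ) (j : V) : ℝ :=
  2 * ⟪(∑ i, u i • g i) - b, g j⟫ + 2 * lam * u j

theorem ell_expand {V : Type*} [Fintype V] {d : ℕ}
    (g : V → EuclideanSpace ℝ (Fin d)) (b : EuclideanSpace ℝ (Fin d))
    (lam : ℝ) (u h : V → ℝ) :
    ell g b lam (fun i => u i + h i) = ell g b lam u + ∑ j, gradEll g b lam u j * h j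
      + ‖∑ i, h i • g i‖ ^ 2 + lam * ∑ i, (h i) ^ 2 := by
  have h1 : (∑ i, (u i + h i) • g i) - b = ((∑ i, u i • g i) - b) + ∑ i, h i • g i := by
    simp only [add_smul, Finset.sum_add_distrib]
    abel
  have h2 : ∑ j, gradEll g b lam u j * h j
      = 2 * ⟪(∑ i, u i • g i) - b, ∑ i, h i • g i⟫ + 2 * lam * ∑ j, u j * h j := by
    rw [inner_sum, Finset.mul_sum, Finset.mul_sum, ← Finset.sum_add_distrib]
    refine Finset.sum_congr rfl fun j _ => ?_
    rw [inner_smul_right, gradEll]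
    ring
  have h3 : ∑ i, (u i + h i) ^ 2 = ∑ i, (u i) ^ 2 + 2 * ∑ i, u i * h i + ∑ i, (h i) ^ 2 := by
    rw [Finset.mul_sum, ← Finset.sum_add_distrib, ← Finset.sum_add_distrib]
    exact Finset.sum_congr rfl fun j _ => by ring
  rw [h2]
  unfold ell
  rw [h1, h3, norm_add_sq_real]
  ring

/-- For `T` disjoint from `S`: `E(S) − E(S∪T) ≤ (1/(4λ)) ∑_{j∈T} ((∇ℓ(w^S))ⱼ)²`. -/
theorem marginal_decrease_upper_bound
    {V : Type*} [Fintype V] [DecidableEq V] {d : ℕ} (hd : 1 ≤ d)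
    (g : V → EuclideanSpace ℝ (Fin d))
    (b : EuclideanSpace ℝ (Fin d)) (lam : ℝ) (hlam : 0 < lam)
    (S : Finset V)
    (wS : V → ℝ) (hwS_supp : ∀ i ∉ S, wS i = 0)
    (hwS_min : ∀ w' : V → ℝ, (∀ i ∉ S, w' i = 0) →
      ell g b lam wS ≤ ell g b lam w')
    (T : Finset V) (hST : Disjoint S T) :
    EErr g b lam S - EErr g b lam (S ∪ T) ≤
      (1 / (4 * lam)) * ∑ j ∈ T, (gradEll g b lam wS j) ^ 2 := by
  have hnn : ∀ w, 0 ≤ ell g b lam w := fun w => by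
    unfold ell
    positivity
  have hgrad : ∀ j ∈ S, gradEll g b lam wS j = 0 := by
    intro j hj
    set G := gradEll g b lam wS j with hG
    set c := ‖g j‖ ^ 2 + lam with hc
    have hcpos : 0 < c := by positivity
    have key : ∀ t : ℝ, 0 ≤ G * t + c * t ^ 2 := by
      intro t
      have h1 := hwS_min (fun i => wS i + (Pi.single j t : V → ℝ) i) (by
        intro i hi
        have hij : i ≠ j := fun e => hi (e ▸ hj)
        simp [hwS_supp i hi, hij])
      rw [ell_expand] at h1
      simp only [Pi.single_apply, ite_smul, zero_smul, mul_ite, mul_zero, ite_pow, ne_eq,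
        OfNat.ofNat_ne_zero, not_false_eq_true, zero_pow, Finset.sum_ite_eq', Finset.mem_univ,
        if_true, norm_smul, mul_pow, Real.norm_eq_abs, sq_abs] at h1
      rw [← hG] at h1
      rw [hc]
      linarith
    have h2 := key (-G / (2 * c))
    have h3 : G * (-G / (2 * c)) + c * (-G / (2 * c)) ^ 2 = - (G ^ 2 / (4 * c)) := by
      field_simp
      ring
    rw [h3] at h2
    by_contra hne
    have : 0 < G ^ 2 / (4 * c) := by positivity
    linarith
  have hES : EErr g b lam S ≤ ell g b lam wS := by
    refine csInf_le ⟨0, ?_⟩ ⟨wS, hwS_supp, rfl⟩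
    rintro y ⟨w, -, rfl⟩
    exact hnn w
  have hET : ell g b lam wS - (1 / (4 * lam)) * ∑ j ∈ T, (gradEll g b lam wS j) ^ 2
      ≤ EErr g b lam (S ∪ T) := by
    refine le_csInf ⟨_, fun _ => 0, fun _ _ => rfl, rfl⟩ ?_
    rintro y ⟨w, hw, rfl⟩
    have he := ell_expand g b lam wS (fun i => w i - wS i)
    simp only [add_sub_cancel] at he
    rw [he]
    have hb : -((1 / (4 * lam)) * ∑ j ∈ T, (gradEll g b lam wS j) ^ 2) ≤
        ∑ j, gradEll g b lam wS j * (w j - wS j) + lam * ∑ i, (w i - wS i) ^ 2 := by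
      rw [Finset.mul_sum, Finset.mul_sum, ← Finset.sum_add_distrib, ← Finset.sum_neg_distrib]
      have hq : ∀ G x : ℝ, -((1 / (4 * lam)) * G ^ 2) ≤ G * x + lam * x ^ 2 := by
        intro G x
        have : G * x + lam * x ^ 2 + (1 / (4 * lam)) * G ^ 2
            = lam * (x + G / (2 * lam)) ^ 2 := by
          field_simp
          ring
        have h0 : 0 ≤ lam * (x + G / (2 * lam)) ^ 2 := by positivity
        linarith
      refine (Finset.sum_le_sum fun j _ => hq _ (w j - wS j)).trans ?_
      refine Finset.sum_le_sum_of_subset_of_nonneg (Finset.subset_univ T) fun j _ hjT => ?_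
      by_cases hjS : j ∈ S
      · rw [hgrad j hjS]
        have : 0 ≤ lam * (w j - wS j) ^ 2 := by positivity
        linarith
      · rw [hw j (by simp [hjS, hjT]), hwS_supp j hjS]
        simp
    have := sq_nonneg ‖∑ i, (w i - wS i) • g i‖
    linarith
  linarith
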